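/- Let L be a completely distributive commutative subspace lattice on H and Φ a rank preserving linear map on Alg L. Set M_i = ⋁{E ∈ L : E is isolated}, M_c = (⋁{E ∈ L : E is consistent with respect to Φ}) ∩ M_i^⊥, and M_t = (⋁{E ∈ L : E is twisted with respect to Φ}) ∩ M_i^⊥. Then M_i, M_c, M_t are mutually orthogonal closed subspaces with M_i ⊕ M_c ⊕ M_t = H, each of M_i, M_c, M_t and each of their orthogonal complements belongs to L, and consequently every A ∈ Alg L satisfies A = P_i A P_i + P_c A P_c + P_t A P_t, where P_i, P_c, P_t are the orthogonal projections onto M_i, M_c, M_t respectively. -/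

import Mathlib

open scoped InnerProductSpace

noncomputable section

/-- The join (closed linear span) of a family of subspaces of a Hilbert space. -/
def closedJoin {H : Type*} [NormedAddCommGroup H] [InnerProductSpace ℂ H]
    (S : Set (Submodule ℂ H)) : Submodule ℂ H :=
  (sSup S).topologicalClosure

/-- A subspace lattice on `H`: a family of closed subspaces containing `{0}` and `H`,
closed under arbitrary intersections and arbitrary closed linear spans. -/
structure IsSubspaceLattice {H : Type*} [NormedAddCommGroup H] [InnerProductSpace ℂ H]
    (L : Set (Submodule ℂ H)) : Prop where
  isClosed : ∀ E ∈ L, IsClosed (E : Set H)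
  bot_mem : ⊥ ∈ L
  top_mem : ⊤ ∈ L
  sInf_mem : ∀ S : Set (Submodule ℂ H), S ⊆ L → sInf S ∈ L
  join_mem : ∀ S : Set (Submodule ℂ H), S ⊆ L → closedJoin S ∈ L

/-- `M₋`: the join of all members of `L` that do not contain `M`. -/
def minus {H : Type*} [NormedAddCommGroup H] [InnerProductSpace ℂ H]
    (L : Set (Submodule ℂ H)) (M : Submodule ℂ H) : Submodule ℂ H :=
  closedJoin {E | E ∈ L ∧ ¬ M ≤ E}

open Classical in
/-- The orthogonal projection of `H` onto a closed subspace `E`, as an operator on `H`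
(junk value `0` if `E` is not closed). -/
def projOf {H : Type*} [NormedAddCommGroup H] [InnerProductSpace ℂ H] [CompleteSpace H]
    (E : Submodule ℂ H) : H →L[ℂ] H :=
  if h : IsClosed (E : Set H) then
    haveI : CompleteSpace E := h.completeSpace_coe
    E.subtypeL.comp (Submodule.orthogonalProjectionOnto E)
  else 0

/-- A commutative subspace lattice: the orthogonal projections onto members commute. -/
structure IsCSL {H : Type*} [NormedAddCommGroup H] [InnerProductSpace ℂ H] [CompleteSpace H]
    (L : Set (Submodule ℂ H)) extends IsSubspaceLattice L : Prop where
  commutes : ∀ E ∈ L, ∀ F ∈ L, projOf E * projOf F = projOf F * projOf E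

/-- Complete distributivity of the lattice `L` (meets are intersections, joins are
closed linear spans). -/
def IsCompletelyDistributive {H : Type*} [NormedAddCommGroup H] [InnerProductSpace ℂ H]
    (L : Set (Submodule ℂ H)) : Prop :=
  ∀ (I : Type) (J : I → Type) (E : (i : I) → J i → Submodule ℂ H),
    (∀ i j, E i j ∈ L) →
     ((⨅ i, closedJoin (Set.range (E i)))
        = closedJoin (Set.range fun φ : (∀ i, J i) => ⨅ i, E i (φ i)))
    ∧ (closedJoin (Set.range fun i => ⨅ j, E i j)
        = ⨅ φ : (∀ i, J i), closedJoin (Set.range fun i => E i (φ i)))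

/-- `Alg L`: all bounded operators leaving every member of `L` invariant. -/
def algL {H : Type*} [NormedAddCommGroup H] [InnerProductSpace ℂ H]
    (L : Set (Submodule ℂ H)) : Set (H →L[ℂ] H) :=
  {T | ∀ E ∈ L, ∀ x ∈ E, T x ∈ E}

/-- The rank one operator `x ⊗ f* : h ↦ ⟨h, f⟩ x`. -/
def rankOne {H : Type*} [NormedAddCommGroup H] [InnerProductSpace ℂ H]
    (x f : H) : H →L[ℂ] H :=
  (innerSL ℂ f).smulRight x

/-- The rank of a bounded operator: the dimension of its range. -/
def opRank {H : Type*} [NormedAddCommGroup H] [InnerProductSpace ℂ H]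
    (T : H →L[ℂ] H) : Cardinal :=
  Module.rank ℂ (LinearMap.range (T : H →ₗ[ℂ] H))

/-- `Φ` is a linear map of `Alg L` into itself. -/
structure IsLinearOnAlg {H : Type*} [NormedAddCommGroup H] [InnerProductSpace ℂ H]
    (L : Set (Submodule ℂ H)) (Φ : (H →L[ℂ] H) → (H →L[ℂ] H)) : Prop where
  maps : ∀ A ∈ algL L, Φ A ∈ algL L
  map_add : ∀ A ∈ algL L, ∀ B ∈ algL L, Φ (A + B) = Φ A + Φ B
  map_smul : ∀ (c : ℂ), ∀ A ∈ algL L, Φ (c • A) = c • Φ A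

/-- `Φ` preserves the rank of every finite rank operator in `Alg L`. -/
def RankPreserving {H : Type*} [NormedAddCommGroup H] [InnerProductSpace ℂ H]
    (L : Set (Submodule ℂ H)) (Φ : (H →L[ℂ] H) → (H →L[ℂ] H)) : Prop :=
  ∀ A ∈ algL L, opRank A < Cardinal.aleph0 → opRank (Φ A) = opRank A

/-- `a ∼ b`: (nonzero) vectors `a` and `b` are linearly dependent. -/
def Dep {H : Type*} [NormedAddCommGroup H] [InnerProductSpace ℂ H] (a b : H) : Prop :=
  ∃ c : ℂ, c ≠ 0 ∧ b = c • a

/-- `N` is consistent with respect to `Φ`. -/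
def Consistent {H : Type*} [NormedAddCommGroup H] [InnerProductSpace ℂ H]
    (L : Set (Submodule ℂ H)) (Φ : (H →L[ℂ] H) → (H →L[ℂ] H))
    (N : Submodule ℂ H) : Prop :=
  N ≠ ⊥ ∧ minus L N ≠ ⊤ ∧
    ∃ (U : N →ₗ[ℂ] H) (V : ((minus L N)ᗮ : Submodule ℂ H) →ₗ[ℂ] H),
      ∀ (x : N) (f : ((minus L N)ᗮ : Submodule ℂ H)),
        Φ (rankOne (x : H) (f : H)) = rankOne (U x) (V f)

/-- `N` is twisted with respect to `Φ`. -/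
def Twisted {H : Type*} [NormedAddCommGroup H] [InnerProductSpace ℂ H]
    (L : Set (Submodule ℂ H)) (Φ : (H →L[ℂ] H) → (H →L[ℂ] H))
    (N : Submodule ℂ H) : Prop :=
  N ≠ ⊥ ∧ minus L N ≠ ⊤ ∧
    ∃ (U : ((minus L N)ᗮ : Submodule ℂ H) →ₗ⋆[ℂ] H) (V : N →ₗ⋆[ℂ] H),
      ∀ (x : N) (f : ((minus L N)ᗮ : Submodule ℂ H)),
        Φ (rankOne (x : H) (f : H)) = rankOne (U f) (V x)

/-- `N` is isolated: `dim N = 1` and `N^⊥ ∈ L`. -/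
def Isolated {H : Type*} [NormedAddCommGroup H] [InnerProductSpace ℂ H]
    (L : Set (Submodule ℂ H)) (N : Submodule ℂ H) : Prop :=
  Module.rank ℂ N = 1 ∧ Nᗮ ∈ L

/-- The family `F` of all `N ∈ L` with `N ≠ {0}` and `N₋ ≠ H`. -/
def famF {H : Type*} [NormedAddCommGroup H] [InnerProductSpace ℂ H]
    (L : Set (Submodule ℂ H)) : Set (Submodule ℂ H) :=
  {N | N ∈ L ∧ N ≠ ⊥ ∧ minus L N ≠ ⊤}

/-- Subspaces are comparable if one contains the other. -/
def Comparable' {H : Type*} [NormedAddCommGroup H] [InnerProductSpace ℂ H]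
    (M N : Submodule ℂ H) : Prop :=
  M ≤ N ∨ N ≤ M

/-- There is a chain in `F` from `M` to `N`. -/
def ChainConn {H : Type*} [NormedAddCommGroup H] [InnerProductSpace ℂ H]
    (L : Set (Submodule ℂ H)) (M N : Submodule ℂ H) : Prop :=
  ∃ (n : ℕ) (c : Fin (n + 1) → Submodule ℂ H),
    (∀ k, c k ∈ famF L) ∧ c 0 = M ∧ c (Fin.last n) = N ∧
      ∀ k : Fin n, Comparable' (c k.castSucc) (c k.succ)

/-- `𝔊_N`: all members of `F` that can be connected to `N` by a chain. -/
def GSet {H : Type*} [NormedAddCommGroup H] [InnerProductSpace ℂ H]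
    (L : Set (Submodule ℂ H)) (N : Submodule ℂ H) : Set (Submodule ℂ H) :=
  {M | M ∈ famF L ∧ ChainConn L N M}

end

/-!
Since `Φ` preserves ranks one and two, for `N ≠ 0` with `N₋ ≠ H` the map `(x, f) ↦ Φ (x ⊗ f*)` on
`N × N₋^⊥` takes values of rank at most one, and a sum of two of its values has rank at most one
only if the vectors or the functionals are proportional. A linear space of operators of rank at most
one has a common range or a common functional; comparing rows and columns of the map, `N` is
consistent or twisted.

If `M ≤ N` are of different types, then on the overlap `M × N₋^⊥` every row and every column has
both a common range and a common functional, so `M` and `N₋^⊥` are one-dimensional; this forces `M`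
to be isolated. By complete distributivity every nonzero member of `L` below both `M_c` and `M_t`
would contain such an `M`, and the members `N` with `N₋ ≠ H` span `H`. Commutativity turns trivial
intersections into orthogonality and splits each member of `L` along `M_i`.
-/

section RankLEOne

theorem mem_span_singleton_symm {K M : Type*} [DivisionRing K] [AddCommGroup M] [Module K M]
    {x y : M} (h : x ∈ K ∙ y) (hx : x ≠ 0) : y ∈ K ∙ x := by
  obtain ⟨c, rfl⟩ := Submodule.mem_span_singleton.mp h
  exact Submodule.mem_span_singleton.mpr ⟨c⁻¹, inv_smul_smul₀ (left_ne_zero_of_smul hx) y⟩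

theorem opRank_eq_zero_iff {H : Type*} [NormedAddCommGroup H] [InnerProductSpace ℂ H]
    {T : H →L[ℂ] H} : opRank T = 0 ↔ T = 0 := by
  rw [opRank, Submodule.rank_eq_zero, LinearMap.range_eq_bot,
    ← ContinuousLinearMap.toLinearMap_zero, ContinuousLinearMap.coe_inj]

variable {𝕜 E F ι κ : Type*} [RCLike 𝕜] [NormedAddCommGroup E] [InnerProductSpace 𝕜 E]
  [NormedAddCommGroup F] [InnerProductSpace 𝕜 F]

local notation:75 x:76 " ⊗⋆ " f:76 => InnerProductSpace.rankOne 𝕜 x f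

/-- `T` is a bounded operator of rank at most one, that is, of the form
`u ⊗ v* : h ↦ ⟪v, h⟫ u`. -/
def IsRankLEOne (T : F →L[𝕜] E) : Prop :=
  ∃ u v, T = u ⊗⋆ v

theorem isRankLEOne_iff_opRank_le_one {H : Type*} [NormedAddCommGroup H] [InnerProductSpace ℂ H]
    [CompleteSpace H] {T : H →L[ℂ] H} : IsRankLEOne T ↔ opRank T ≤ 1 := by
  rw [opRank, rank_submodule_le_one_iff']
  constructor
  · rintro ⟨u, v, rfl⟩
    refine ⟨u, ?_⟩
    rintro _ ⟨h, rfl⟩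
    exact Submodule.mem_span_singleton.mpr ⟨⟪v, h⟫_ℂ, rfl⟩
  · rintro ⟨u, hu⟩
    have hT : ∀ h, ∃ c : ℂ, c • u = T h := fun h ↦
      Submodule.mem_span_singleton.mp (hu (LinearMap.mem_range_self _ h))
    rcases eq_or_ne u 0 with rfl | hu0
    · exact ⟨0, 0, by ext h; simpa [eq_comm] using hT h⟩
    have huu : ⟪u, u⟫_ℂ ≠ 0 := inner_self_ne_zero.mpr hu0
    refine ⟨(⟪u, u⟫_ℂ)⁻¹ • u, T.adjoint u, ?_⟩
    ext h
    obtain ⟨c, hc⟩ := hT h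
    rw [InnerProductSpace.rankOne_apply, ContinuousLinearMap.adjoint_inner_left, ← hc,
      inner_smul_right, smul_smul, mul_assoc, mul_inv_cancel₀ huu, mul_one]

theorem exists_inner_eq_zero_and_inner_ne_zero {b d : F} (hd : d ∉ 𝕜 ∙ b) :
    ∃ k : F, inner 𝕜 b k = 0 ∧ inner 𝕜 d k ≠ 0 := by
  contrapose! hd
  rw [← (𝕜 ∙ b).orthogonal_orthogonal, Submodule.mem_orthogonal']
  exact fun k hk ↦ hd k (Submodule.mem_orthogonal_singleton_iff_inner_right.mp hk)

theorem IsRankLEOne.mem_span_singleton_or {a c : E} {b d : F}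
    (h : IsRankLEOne (a ⊗⋆ b + c ⊗⋆ d)) (ha : a ≠ 0) (hb : b ≠ 0) : c ∈ 𝕜 ∙ a ∨ d ∈ 𝕜 ∙ b := by
  obtain ⟨u, v, huv⟩ := h
  rw [or_iff_not_imp_right]
  intro hd
  obtain ⟨k, hbk, hdk⟩ := exists_inner_eq_zero_and_inner_ne_zero hd
  have happly (x : F) : inner 𝕜 b x • a + inner 𝕜 d x • c ∈ 𝕜 ∙ u :=
    Submodule.mem_span_singleton.mpr ⟨inner 𝕜 v x, (DFunLike.congr_fun huv x).symm⟩
  have hcu : c ∈ 𝕜 ∙ u := by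
    simpa [hbk, Submodule.smul_mem_iff _ hdk] using happly k
  have hau : a ∈ 𝕜 ∙ u := by
    rw [← Submodule.smul_mem_iff _ (inner_self_ne_zero (𝕜 := 𝕜).mpr hb)]
    exact (Submodule.add_mem_iff_left _ (Submodule.smul_mem _ _ hcu)).mp (happly b)
  exact Submodule.mem_span_singleton_trans hcu (mem_span_singleton_symm hau ha)

theorem exists_rankOne_eq_of_mem_span_left {a c : E} (h : c ∈ 𝕜 ∙ a) (d : F) :
    ∃ w, a ⊗⋆ w = c ⊗⋆ d := by
  obtain ⟨s, rfl⟩ := Submodule.mem_span_singleton.mp h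
  exact ⟨starRingEnd 𝕜 s • d, by simp⟩

theorem exists_rankOne_eq_of_mem_span_right {b d : F} (h : d ∈ 𝕜 ∙ b) (c : E) :
    ∃ w, w ⊗⋆ b = c ⊗⋆ d := by
  obtain ⟨s, rfl⟩ := Submodule.mem_span_singleton.mp h
  exact ⟨starRingEnd 𝕜 s • c, by simp⟩

theorem mem_span_left_of_rankOne_eq {a c : E} {b d : F} (h : a ⊗⋆ b = c ⊗⋆ d) (hd : d ≠ 0) :
    c ∈ 𝕜 ∙ a := by
  rw [← Submodule.smul_mem_iff _ (inner_self_ne_zero (𝕜 := 𝕜).mpr hd), Submodule.mem_span_singleton]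
  exact ⟨inner 𝕜 b d, DFunLike.congr_fun h d⟩

theorem mem_span_right_of_rankOne_eq {a c : E} {b d : F} (h : a ⊗⋆ b = c ⊗⋆ d) (hc : c ≠ 0) :
    d ∈ 𝕜 ∙ b :=
  mem_span_left_of_rankOne_eq (InnerProductSpace.rankOne_eq_rankOne_iff_comm.mp h) hc

/-- The operators `T i` all have the form `u ⊗ (v i)*` with the same vector `u`. -/
def HasCommonRange (T : ι → F →L[𝕜] E) : Prop :=
  ∃ u, ∀ i, ∃ v, T i = u ⊗⋆ v

/-- The operators `T i` all have the form `(u i) ⊗ v*` with the same functional `v*`. -/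
def HasCommonFunctional (T : ι → F →L[𝕜] E) : Prop :=
  ∃ v, ∀ i, ∃ u, T i = u ⊗⋆ v

theorem HasCommonRange.comp {T : ι → F →L[𝕜] E} (h : HasCommonRange T) (g : κ → ι) :
    HasCommonRange fun i ↦ T (g i) :=
  h.imp fun _ hu i ↦ hu (g i)

theorem HasCommonFunctional.comp {T : ι → F →L[𝕜] E} (h : HasCommonFunctional T) (g : κ → ι) :
    HasCommonFunctional fun i ↦ T (g i) :=
  h.imp fun _ hv i ↦ hv (g i)

theorem HasCommonRange.isRankLEOne_add {T : ι → F →L[𝕜] E} {T' : κ → F →L[𝕜] E}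
    (hT : HasCommonRange T) (hT' : HasCommonRange T') {i : ι} {j : κ} (hij : T i = T' j)
    (hne : T' j ≠ 0) (i' : ι) (j' : κ) : IsRankLEOne (T i' + T' j') := by
  obtain ⟨u, hu⟩ := hT
  obtain ⟨u', hu'⟩ := hT'
  obtain ⟨v, hv⟩ := hu i
  obtain ⟨v', hv'⟩ := hu' j
  have hmem : u' ∈ 𝕜 ∙ u :=
    mem_span_left_of_rankOne_eq (hv.symm.trans (hij.trans hv')) (by rintro rfl; simp [hv'] at hne)
  obtain ⟨y, hy⟩ := hu i'
  obtain ⟨y', hy'⟩ := hu' j'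
  obtain ⟨w, hw⟩ := exists_rankOne_eq_of_mem_span_left hmem y'
  exact ⟨u, y + w, by rw [hy, hy', ← hw, map_add]⟩

theorem HasCommonFunctional.isRankLEOne_add {T : ι → F →L[𝕜] E} {T' : κ → F →L[𝕜] E}
    (hT : HasCommonFunctional T) (hT' : HasCommonFunctional T') {i : ι} {j : κ} (hij : T i = T' j)
    (hne : T' j ≠ 0) (i' : ι) (j' : κ) : IsRankLEOne (T i' + T' j') := by
  obtain ⟨v, hv⟩ := hT
  obtain ⟨v', hv'⟩ := hT'
  obtain ⟨u, hu⟩ := hv i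
  obtain ⟨u', hu'⟩ := hv' j
  have hmem : v' ∈ 𝕜 ∙ v :=
    mem_span_right_of_rankOne_eq (hu.symm.trans (hij.trans hu')) (by rintro rfl; simp [hu'] at hne)
  obtain ⟨y, hy⟩ := hv i'
  obtain ⟨y', hy'⟩ := hv' j'
  obtain ⟨w, hw⟩ := exists_rankOne_eq_of_mem_span_right hmem y'
  exact ⟨y + w, v, by rw [hy, hy', ← hw, map_add, add_apply]⟩

theorem HasCommonRange.exists_forall_mem_span_singleton {T : ι → F →L[𝕜] E}
    (h : HasCommonRange T) (h' : HasCommonFunctional T) : ∃ R, ∀ i, T i ∈ 𝕜 ∙ R := by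
  obtain ⟨u, hu⟩ := h
  obtain ⟨v, hv⟩ := h'
  refine ⟨u ⊗⋆ v, fun i ↦ ?_⟩
  obtain ⟨y, hy⟩ := hu i
  obtain ⟨x, hx⟩ := hv i
  rcases eq_or_ne (T i) 0 with h0 | h0
  · exact h0 ▸ Submodule.zero_mem _
  have hxu : x ∈ 𝕜 ∙ u :=
    mem_span_left_of_rankOne_eq (hy.symm.trans hx) (by rintro rfl; simp [hx] at h0)
  obtain ⟨s, rfl⟩ := Submodule.mem_span_singleton.mp hxu
  exact Submodule.mem_span_singleton.mpr ⟨s, by simp [hx]⟩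

theorem hasCommonRange_or_hasCommonFunctional {𝓣 G : Type*} [AddGroup G] [FunLike 𝓣 G (F →L[𝕜] E)]
    [AddMonoidHomClass 𝓣 G (F →L[𝕜] E)] (T : 𝓣) (hT : ∀ g, IsRankLEOne (T g)) :
    HasCommonRange T ∨ HasCommonFunctional T := by
  by_cases hT0 : ∀ g, T g = 0
  · exact .inl ⟨0, fun g ↦ ⟨0, by simp [hT0 g]⟩⟩
  push Not at hT0
  obtain ⟨g₀, hg₀⟩ := hT0
  obtain ⟨u, v, huv⟩ := hT g₀
  have hu : u ≠ 0 := by rintro rfl; simp [huv] at hg₀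
  have hv : v ≠ 0 := by rintro rfl; simp [huv] at hg₀
  -- The range of `T` is covered by the subgroups `u ⊗ F*` and `E ⊗ v*`, so it lies in one of them.
  let A : AddSubgroup (F →L[𝕜] E) := (InnerProductSpace.rankOne 𝕜 (F := F) u).toAddMonoidHom.range
  let B : AddSubgroup (F →L[𝕜] E) :=
    ((InnerProductSpace.rankOne 𝕜 (E := E)).flip v).toAddMonoidHom.range
  have hsub : ((T : G →+ F →L[𝕜] E).range : Set (F →L[𝕜] E)) ⊆ A ∪ B := by
    rintro _ ⟨g, rfl⟩
    obtain ⟨c, d, hcd⟩ := hT g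
    have hsum : IsRankLEOne (u ⊗⋆ v + c ⊗⋆ d) := by
      rw [← huv, ← hcd, ← map_add]
      exact hT _
    change T g ∈ (A : Set (F →L[𝕜] E)) ∪ B
    rw [hcd]
    exact (hsum.mem_span_singleton_or hu hv).imp
      (exists_rankOne_eq_of_mem_span_left · d) (exists_rankOne_eq_of_mem_span_right · c)
  refine (AddSubgroupClass.subset_union.mp hsub).imp (fun h ↦ ⟨u, fun g ↦ ?_⟩)
    fun h ↦ ⟨v, fun g ↦ ?_⟩
  · exact (h ⟨g, rfl⟩).imp fun _ ↦ Eq.symm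
  · exact (h ⟨g, rfl⟩).imp fun _ ↦ Eq.symm

theorem exists_semilinearMap_lift {R S M N P : Type*} [Semiring R] [Semiring S] [AddCommMonoid M]
    [AddCommMonoid N] [AddCommMonoid P] [Module R M] [Module S N] [Module S P] {σ τ : R →+* S}
    {ρ : S →+* S} [RingHomCompTriple σ ρ τ] (J : N →ₛₗ[ρ] P) (hJ : Function.Injective J)
    (T : M →ₛₗ[τ] P) (h : ∀ x, ∃ y, J y = T x) : ∃ U : M →ₛₗ[σ] N, ∀ x, J (U x) = T x := by
  choose U hU using h
  refine ⟨{ toFun := U, map_add' := fun x y ↦ hJ ?_, map_smul' := fun c x ↦ hJ ?_ }, hU⟩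
  · simp only [hU, map_add]
  · simp only [hU, LinearMap.map_smulₛₗ, RingHomCompTriple.comp_apply]

theorem exists_eq_smul_of_forall_mem_span_singleton {K M N : Type*} [Field K] [AddCommGroup M]
    [Module K M] [AddCommGroup N] [Module K N] {σ : K →+* K} [RingHomSurjective σ]
    {S U : M →ₛₗ[σ] N} (hU : ∀ x, U x = 0 → x = 0) (h : ∀ x, S x ∈ K ∙ U x) :
    ∃ c : K, S = c • U := by
  by_cases hM : ∀ x : M, x = 0
  · exact ⟨0, LinearMap.ext fun x ↦ by simp [hM x]⟩
  push Not at hM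
  obtain ⟨x₀, hx₀⟩ := hM
  obtain ⟨c₀, hc₀⟩ := Submodule.mem_span_singleton.mp (h x₀)
  refine ⟨c₀, LinearMap.ext fun x ↦ ?_⟩
  obtain ⟨c, hc⟩ := Submodule.mem_span_singleton.mp (h x)
  obtain ⟨d, hd⟩ := Submodule.mem_span_singleton.mp (h (x + x₀))
  have hcomb : (d - c) • U x = (c₀ - d) • U x₀ := by
    rw [map_add, map_add, ← hc, ← hc₀, smul_add] at hd
    rw [sub_smul, sub_smul, sub_eq_sub_iff_add_eq_add, hd, add_comm]
  rcases eq_or_ne d c₀ with rfl | hne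
  · rw [← hc, LinearMap.smul_apply, ← sub_eq_zero, ← sub_smul, ← neg_sub, neg_smul, hcomb, sub_self,
      zero_smul, neg_zero]
  obtain ⟨r, hr⟩ := σ.surjective ((c₀ - d)⁻¹ * (d - c))
  have hx₀r : x₀ = r • x := by
    rw [← sub_eq_zero]
    apply hU
    rw [map_sub, LinearMap.map_smulₛₗ, hr, mul_smul, hcomb,
      inv_smul_smul₀ (sub_ne_zero.mpr hne.symm), sub_self]
  have hr0 : σ r ≠ 0 := (map_ne_zero σ).mpr (by rintro rfl; simp [hx₀r] at hx₀)
  apply smul_right_injective N hr0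
  simp only [LinearMap.smul_apply, ← LinearMap.map_smulₛₗ, ← hx₀r, ← hc₀, smul_comm _ c₀]

theorem exists_eq_rankOne_right {X : Type*} [AddCommGroup X] [Module 𝕜 X] {σ : 𝕜 →+* 𝕜}
    {T : X →ₛₗ[σ] F →L[𝕜] E} (hT : HasCommonFunctional T) :
    ∃ (S : X →ₛₗ[σ] E) (v : F), ∀ x, T x = S x ⊗⋆ v := by
  obtain ⟨v, hv⟩ := hT
  rcases eq_or_ne v 0 with rfl | hv0
  · exact ⟨0, 0, fun x ↦ by simpa using hv x⟩
  let J : E →ₗ[𝕜] F →L[𝕜] E :=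
    { toFun := fun u ↦ u ⊗⋆ v, map_add' := by simp, map_smul' := by simp }
  have hJ : Function.Injective J := (injective_iff_map_eq_zero J).mpr fun u hu ↦
    (InnerProductSpace.rankOne_eq_zero.mp hu).resolve_right hv0
  obtain ⟨S, hS⟩ := exists_semilinearMap_lift (σ := σ) J hJ T fun x ↦ (hv x).imp fun _ ↦ Eq.symm
  exact ⟨S, v, fun x ↦ (hS x).symm⟩

/-- `B` behaves like the pairing `(x, y) ↦ x ⊗ y*` as far as operators of rank at most one are
concerned; the twists `σ` and `τ` let the two arguments exchange their roles. -/
structure IsRankOnePairing {X Y : Type*} [AddCommGroup X] [Module 𝕜 X] [AddCommGroup Y]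
    [Module 𝕜 Y] {σ τ : 𝕜 →+* 𝕜} (B : X →ₛₗ[σ] Y →ₛₗ[τ] F →L[𝕜] E) : Prop where
  isRankLEOne : ∀ x y, IsRankLEOne (B x y)
  eq_zero_or_eq_zero : ∀ {x y}, B x y = 0 → x = 0 ∨ y = 0
  mem_span_or_mem_span : ∀ {x x' y y'}, IsRankLEOne (B x y + B x' y') → x ≠ 0 → y ≠ 0 →
    x' ∈ 𝕜 ∙ x ∨ y' ∈ 𝕜 ∙ y

namespace IsRankOnePairing

variable {X Y : Type*} [AddCommGroup X] [Module 𝕜 X] [AddCommGroup Y] [Module 𝕜 Y]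
  {σ τ : 𝕜 →+* 𝕜} {B : X →ₛₗ[σ] Y →ₛₗ[τ] F →L[𝕜] E}

theorem flip (hB : IsRankOnePairing B) : IsRankOnePairing B.flip where
  isRankLEOne y x := hB.isRankLEOne x y
  eq_zero_or_eq_zero h := (hB.eq_zero_or_eq_zero h).symm
  mem_span_or_mem_span h hy hx := (hB.mem_span_or_mem_span h hx hy).symm

theorem ne_zero (hB : IsRankOnePairing B) {x : X} {y : Y} (hx : x ≠ 0) (hy : y ≠ 0) : B x y ≠ 0 :=
  fun h ↦ (hB.eq_zero_or_eq_zero h).elim hx hy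

theorem row (hB : IsRankOnePairing B) (x : X) : HasCommonRange (B x) ∨ HasCommonFunctional (B x) :=
  hasCommonRange_or_hasCommonFunctional (B x) (hB.isRankLEOne x)

theorem mem_span_singleton_of_hasCommonRange_of_hasCommonFunctional [RingHomSurjective σ]
    (hB : IsRankOnePairing B) {x₀ : X} {y : Y} (hx₀ : x₀ ≠ 0) (hy : y ≠ 0)
    (hrange : HasCommonRange (B.flip y)) (hfunctional : HasCommonFunctional (B.flip y)) (x : X) :
    x ∈ 𝕜 ∙ x₀ := by
  obtain ⟨R, hR⟩ := hrange.exists_forall_mem_span_singleton hfunctional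
  obtain ⟨c, hc⟩ := Submodule.mem_span_singleton.mp <| Submodule.mem_span_singleton_trans (hR x)
    (mem_span_singleton_symm (hR x₀) (hB.ne_zero hx₀ hy))
  obtain ⟨r, rfl⟩ := σ.surjective c
  have hzero : B (x - r • x₀) y = 0 := by
    simpa [sub_eq_zero] using hc.symm
  exact Submodule.mem_span_singleton.mpr
    ⟨r, (sub_eq_zero.mp ((hB.eq_zero_or_eq_zero hzero).resolve_right hy)).symm⟩

theorem mem_span_or_of_hasCommonRange (hB : IsRankOnePairing B) {x : X} {y : Y} (hx : x ≠ 0)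
    (hy : y ≠ 0) (hrow : HasCommonRange (B x)) (hcol : HasCommonRange (B.flip y))
    (x' : X) (y' : Y) : x' ∈ 𝕜 ∙ x ∨ y' ∈ 𝕜 ∙ y := by
  rcases eq_or_ne y' 0 with rfl | hy'
  · exact .inr (Submodule.zero_mem _)
  exact (hB.mem_span_or_mem_span (hrow.isRankLEOne_add hcol (i := y) (j := x) rfl (hB.ne_zero hx hy)
    y' x') hx hy').imp_right (mem_span_singleton_symm · hy)

theorem mem_span_or_of_hasCommonFunctional (hB : IsRankOnePairing B) {x : X} {y : Y} (hx : x ≠ 0)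
    (hy : y ≠ 0) (hrow : HasCommonFunctional (B x)) (hcol : HasCommonFunctional (B.flip y))
    (x' : X) (y' : Y) : x' ∈ 𝕜 ∙ x ∨ y' ∈ 𝕜 ∙ y := by
  rcases eq_or_ne y' 0 with rfl | hy'
  · exact .inr (Submodule.zero_mem _)
  exact (hB.mem_span_or_mem_span (hrow.isRankLEOne_add hcol (i := y) (j := x) rfl (hB.ne_zero hx hy)
    y' x') hx hy').imp_right (mem_span_singleton_symm · hy)

theorem exists_eq_rankOne_left (hB : IsRankOnePairing B) [RingHomSurjective σ] {y₀ : Y} {v₀ : F}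
    {U : X →ₛₗ[σ] E} (hrow : ∀ x ≠ 0, HasCommonRange (B x)) {y : Y}
    (hcol : HasCommonFunctional (B.flip y)) (hy₀ : y₀ ≠ 0) (hU : ∀ x, U x = 0 → x = 0)
    (hUv : ∀ x, B x y₀ = U x ⊗⋆ v₀) : ∃ w, ∀ x, B x y = U x ⊗⋆ w := by
  obtain ⟨S, v, hSv⟩ := exists_eq_rankOne_right hcol
  rcases eq_or_ne v 0 with rfl | hv
  · exact ⟨0, fun x ↦ by simpa using hSv x⟩
  have hS : ∀ x, S x ∈ 𝕜 ∙ U x := fun x ↦ by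
    rcases eq_or_ne x 0 with rfl | hx
    · simp
    have hv₀ : v₀ ≠ 0 := by rintro rfl; exact hB.ne_zero hx hy₀ (by simpa using hUv x)
    obtain ⟨u, hu⟩ := hrow x hx
    obtain ⟨a, ha⟩ := hu y₀
    obtain ⟨b, hb⟩ := hu y
    have hUu : U x ∈ 𝕜 ∙ u := mem_span_left_of_rankOne_eq (ha.symm.trans (hUv x)) hv₀
    have hSu : S x ∈ 𝕜 ∙ u := mem_span_left_of_rankOne_eq (hb.symm.trans (hSv x)) hv
    exact Submodule.mem_span_singleton_trans hSu (mem_span_singleton_symm hUu (mt (hU x) hx))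
  obtain ⟨c, rfl⟩ := exists_eq_smul_of_forall_mem_span_singleton hU hS
  exact ⟨starRingEnd 𝕜 c • v, fun x ↦ (hSv x).trans (by simp)⟩

theorem exists_eq_rankOne (hB : IsRankOnePairing B) [RingHomSurjective σ] {τ' : 𝕜 →+* 𝕜}
    [RingHomCompTriple τ' (starRingEnd 𝕜) τ] (hrow : ∀ x ≠ 0, HasCommonRange (B x))
    (hcol : ∀ y ≠ 0, HasCommonFunctional (B.flip y)) :
    ∃ (U : X →ₛₗ[σ] E) (V : Y →ₛₗ[τ'] F), ∀ x y, B x y = U x ⊗⋆ V y := by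
  by_cases hzero : ∀ x y, B x y = 0
  · exact ⟨0, 0, fun x y ↦ by simp [hzero x y]⟩
  push Not at hzero
  obtain ⟨x₀, y₀, h₀⟩ := hzero
  have hx₀ : x₀ ≠ 0 := by rintro rfl; simp at h₀
  have hy₀ : y₀ ≠ 0 := by rintro rfl; simp at h₀
  obtain ⟨U, v₀, hUv⟩ := exists_eq_rankOne_right (hcol y₀ hy₀)
  have hU : ∀ x, U x = 0 → x = 0 := fun x hx ↦
    (hB.eq_zero_or_eq_zero (x := x) (y := y₀) (by simpa [hx] using hUv x)).resolve_right hy₀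
  have hcolU : ∀ y, ∃ w, ∀ x, B x y = U x ⊗⋆ w := fun y ↦ by
    rcases eq_or_ne y 0 with rfl | hy
    · exact ⟨0, by simp⟩
    exact hB.exists_eq_rankOne_left hrow (hcol y hy) hy₀ hU hUv
  have hinj : Function.Injective (InnerProductSpace.rankOne 𝕜 (F := F) (U x₀)) :=
    (injective_iff_map_eq_zero _).mpr fun w hw ↦
      (InnerProductSpace.rankOne_eq_zero.mp hw).resolve_left (mt (hU x₀) hx₀)
  obtain ⟨V, hV⟩ := exists_semilinearMap_lift (σ := τ')
    (InnerProductSpace.rankOne 𝕜 (F := F) (U x₀)).toLinearMap hinj (B x₀)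
    fun y ↦ (hcolU y).imp fun w hw ↦ (hw x₀).symm
  refine ⟨U, V, fun x y ↦ ?_⟩
  obtain ⟨w, hw⟩ := hcolU y
  rw [hw, hinj ((hV y).trans (hw x₀))]

theorem rows_columns_of_forall_mem_span (hB : IsRankOnePairing B) {x₀ : X}
    (hX : ∀ x, x ∈ 𝕜 ∙ x₀) :
    (∀ x ≠ 0, HasCommonRange (B x)) ∧ (∀ y ≠ 0, HasCommonFunctional (B.flip y)) ∨
      (∀ x ≠ 0, HasCommonFunctional (B x)) ∧ (∀ y ≠ 0, HasCommonRange (B.flip y)) := by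
  have hX' (x : X) : ∃ c : 𝕜, ∀ y, B x y = c • B x₀ y := by
    obtain ⟨c, rfl⟩ := Submodule.mem_span_singleton.mp (hX x)
    exact ⟨σ c, by simp⟩
  have hcol (y : Y) : HasCommonRange (B.flip y) ∧ HasCommonFunctional (B.flip y) := by
    obtain ⟨u, v, huv⟩ := hB.isRankLEOne x₀ y
    exact ⟨⟨u, fun x ↦ (hX' x).elim fun c hc ↦ ⟨starRingEnd 𝕜 c • v, by simp [hc, huv]⟩⟩,
      ⟨v, fun x ↦ (hX' x).elim fun c hc ↦ ⟨c • u, by simp [hc, huv]⟩⟩⟩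
  refine (hB.row x₀).imp (fun ⟨u, hu⟩ ↦ ⟨fun x _ ↦ ?_, fun y _ ↦ (hcol y).2⟩)
    fun ⟨v, hv⟩ ↦ ⟨fun x _ ↦ ?_, fun y _ ↦ (hcol y).1⟩
  all_goals obtain ⟨c, hc⟩ := hX' x
  · exact ⟨c • u, fun y ↦ (hu y).imp fun v hv ↦ by simp [hc, hv]⟩
  · exact ⟨starRingEnd 𝕜 c • v, fun y ↦ (hv y).imp fun u hu ↦ by simp [hc, hu]⟩

theorem rows_columns_of_forall_notMem_span (hB : IsRankOnePairing B)
    (hX : ∀ x₀ : X, ∃ x, x ∉ 𝕜 ∙ x₀) (hY : ∀ y₀ : Y, ∃ y, y ∉ 𝕜 ∙ y₀) :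
    (∀ x ≠ 0, HasCommonRange (B x)) ∧ (∀ y ≠ 0, HasCommonFunctional (B.flip y)) ∨
      (∀ x ≠ 0, HasCommonFunctional (B x)) ∧ (∀ y ≠ 0, HasCommonRange (B.flip y)) := by
  have hspan {x : X} {y : Y} (h : ∀ x' y', x' ∈ 𝕜 ∙ x ∨ y' ∈ 𝕜 ∙ y) : False := by
    obtain ⟨x', hx'⟩ := hX x
    obtain ⟨y', hy'⟩ := hY y
    exact (h x' y').elim hx' hy'
  have hrange {x : X} {y : Y} (hx : x ≠ 0) (hy : y ≠ 0) (h : HasCommonRange (B x))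
      (h' : HasCommonRange (B.flip y)) : False :=
    hspan (hB.mem_span_or_of_hasCommonRange hx hy h h')
  have hfunctional {x : X} {y : Y} (hx : x ≠ 0) (hy : y ≠ 0) (h : HasCommonFunctional (B x))
      (h' : HasCommonFunctional (B.flip y)) : False :=
    hspan (hB.mem_span_or_of_hasCommonFunctional hx hy h h')
  obtain ⟨x₀, hx₀⟩ : ∃ x : X, x ≠ 0 := (hX 0).imp fun x hx ↦ by simpa using hx
  obtain ⟨y₀, hy₀⟩ : ∃ y : Y, y ≠ 0 := (hY 0).imp fun y hy ↦ by simpa using hy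
  rcases hB.row x₀ with h | h
  · have hcol : ∀ y ≠ 0, HasCommonFunctional (B.flip y) := fun y hy ↦
      (hB.flip.row y).resolve_left (hrange hx₀ hy h)
    exact .inl ⟨fun x hx ↦ (hB.row x).resolve_right (hfunctional hx hy₀ · (hcol y₀ hy₀)), hcol⟩
  · have hcol : ∀ y ≠ 0, HasCommonRange (B.flip y) := fun y hy ↦
      (hB.flip.row y).resolve_right (hfunctional hx₀ hy h)
    exact .inr ⟨fun x hx ↦ (hB.row x).resolve_left (hrange hx hy₀ · (hcol y₀ hy₀)), hcol⟩

theorem rows_columns (hB : IsRankOnePairing B) :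
    (∀ x ≠ 0, HasCommonRange (B x)) ∧ (∀ y ≠ 0, HasCommonFunctional (B.flip y)) ∨
      (∀ x ≠ 0, HasCommonFunctional (B x)) ∧ (∀ y ≠ 0, HasCommonRange (B.flip y)) := by
  by_cases hX : ∃ x₀ : X, ∀ x, x ∈ 𝕜 ∙ x₀
  · exact hX.elim fun _ ↦ hB.rows_columns_of_forall_mem_span
  by_cases hY : ∃ y₀ : Y, ∀ y, y ∈ 𝕜 ∙ y₀
  · obtain ⟨y₀, hy₀⟩ := hY
    exact (hB.flip.rows_columns_of_forall_mem_span hy₀).symm.imp And.symm And.symm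
  push Not at hX hY
  exact hB.rows_columns_of_forall_notMem_span hX hY

theorem exists_eq_rankOne_or (hB : IsRankOnePairing B) [RingHomSurjective σ]
    [RingHomSurjective τ] {σ' τ' : 𝕜 →+* 𝕜} [RingHomCompTriple σ' (starRingEnd 𝕜) σ]
    [RingHomCompTriple τ' (starRingEnd 𝕜) τ] :
    (∃ (U : X →ₛₗ[σ] E) (V : Y →ₛₗ[τ'] F), ∀ x y, B x y = U x ⊗⋆ V y) ∨
      ∃ (U : Y →ₛₗ[τ] E) (V : X →ₛₗ[σ'] F), ∀ x y, B x y = U y ⊗⋆ V x := by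
  rcases hB.rows_columns with ⟨hrow, hcol⟩ | ⟨hrow, hcol⟩
  · exact .inl (hB.exists_eq_rankOne hrow hcol)
  · obtain ⟨U, V, h⟩ := hB.flip.exists_eq_rankOne (τ' := σ') hcol hrow
    exact .inr ⟨U, V, fun x y ↦ h y x⟩

end IsRankOnePairing

end RankLEOne

section OrthogonalSum

variable {𝕜 E : Type*} [RCLike 𝕜] [NormedAddCommGroup E] [InnerProductSpace 𝕜 E]
  {U V : Submodule 𝕜 E}

theorem isClosed_sup_of_isOrtho [V.HasOrthogonalProjection] (hU : IsClosed (U : Set E))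
    (h : U ⟂ V) : IsClosed (↑(U ⊔ V) : Set E) := by
  have hcomap : U ⊔ V = U.comap Vᗮ.starProjection.toLinearMap := by
    refine le_antisymm (sup_le (fun u hu ↦ ?_) fun v hv ↦ ?_) fun x hx ↦ ?_
    · rwa [Submodule.mem_comap, ContinuousLinearMap.coe_coe,
        Submodule.starProjection_eq_self_iff.mpr (h hu)]
    · rw [Submodule.mem_comap, ContinuousLinearMap.coe_coe,
        Submodule.starProjection_orthogonal_apply_eq_zero hv]
      exact U.zero_mem
    · rw [← sub_add_cancel x (V.starProjection x), ← Submodule.starProjection_orthogonal_val]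
      exact Submodule.add_mem_sup hx (V.starProjection_apply_mem x)
  rw [hcomap]
  exact hU.preimage Vᗮ.starProjection.continuous

theorem orthogonal_eq_of_isOrtho_of_sup_eq_top (h : U ⟂ V) (htop : U ⊔ V = ⊤) : Uᗮ = V := by
  rw [← inf_top_eq Uᗮ, ← htop, sup_comm, inf_comm, sup_inf_assoc_of_le U h.symm.le,
    U.inf_orthogonal_eq_bot, sup_bot_eq]

theorem eq_sum_starProjection_mul_mul_starProjection {ι : Type*} [Fintype ι]
    {V : ι → Submodule 𝕜 E} [∀ i, CompleteSpace (V i)] (hV : Pairwise fun i j ↦ V i ⟂ V j)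
    (htop : ⨆ i, V i = ⊤) {A : E →L[𝕜] E} (hA : ∀ i, ∀ x ∈ V i, A x ∈ V i) :
    A = ∑ i, (V i).starProjection * A * (V i).starProjection := by
  ext x
  calc A x = A (∑ i, (V i).starProjection x) := by
        rw [(OrthogonalFamily.of_pairwise hV).sum_projection_of_mem_iSup x (htop ▸ trivial)]
    _ = ∑ i, (V i).starProjection (A ((V i).starProjection x)) := by
        rw [map_sum]
        exact Finset.sum_congr rfl fun i _ ↦ (Submodule.starProjection_eq_self_iff.mpr
          (hA i _ ((V i).starProjection_apply_mem x))).symm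
    _ = _ := by simp

end OrthogonalSum

section SubspaceLattice

variable {H : Type*} [NormedAddCommGroup H] [InnerProductSpace ℂ H] {L S : Set (Submodule ℂ H)}
  {E F K M N : Submodule ℂ H}

theorem le_closedJoin (hE : E ∈ S) : E ≤ closedJoin S :=
  (le_sSup hE).trans (Submodule.le_topologicalClosure _)

theorem closedJoin_le (hK : IsClosed (K : Set H)) (h : ∀ E ∈ S, E ≤ K) : closedJoin S ≤ K :=
  Submodule.topologicalClosure_minimal _ (sSup_le h) hK

theorem isClosed_closedJoin : IsClosed (closedJoin S : Set H) :=
  Submodule.isClosed_topologicalClosure _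

theorem orthogonal_closedJoin : (closedJoin S)ᗮ = ⨅ E ∈ S, Eᗮ := by
  rw [closedJoin, Submodule.orthogonal_closure, Submodule.sInf_orthogonal]

theorem le_minus (hE : E ∈ L) (h : ¬M ≤ E) : E ≤ minus L M :=
  le_closedJoin ⟨hE, h⟩

theorem minus_mono (h : M ≤ N) : minus L M ≤ minus L N :=
  closedJoin_le isClosed_closedJoin fun _ hE ↦ le_minus hE.1 fun hN ↦ hE.2 (h.trans hN)

theorem orthogonal_minus_ne_bot [CompleteSpace H] (h : minus L M ≠ ⊤) : (minus L M)ᗮ ≠ ⊥ := by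
  have : CompleteSpace (minus L M) := isClosed_closedJoin.completeSpace_coe
  exact fun hbot ↦ h ((minus L M).orthogonal_eq_bot_iff.mp hbot)

theorem add_mem_algL {A B : H →L[ℂ] H} (hA : A ∈ algL L) (hB : B ∈ algL L) : A + B ∈ algL L :=
  fun E hE x hx ↦ E.add_mem (hA E hE x hx) (hB E hE x hx)

theorem rankOne_eq (x f : H) : rankOne x f = InnerProductSpace.rankOne ℂ x f :=
  rfl

theorem rankOne_mem_algL {x f : H} (hx : x ∈ N) (hf : f ∈ (minus L N)ᗮ) : rankOne x f ∈ algL L := by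
  intro E hE y hy
  change ⟪f, y⟫_ℂ • x ∈ E
  by_cases h : N ≤ E
  · exact E.smul_mem _ (h hx)
  · rw [Submodule.inner_left_of_mem_orthogonal (le_minus hE h hy) hf, zero_smul]
    exact E.zero_mem

namespace IsSubspaceLattice

theorem inf_mem (hL : IsSubspaceLattice L) (hE : E ∈ L) (hF : F ∈ L) : E ⊓ F ∈ L :=
  sInf_pair (a := E) (b := F) ▸ hL.sInf_mem _ (Set.pair_subset hE hF)

theorem sup_mem (hL : IsSubspaceLattice L) (hE : E ∈ L) (hF : F ∈ L)
    (h : IsClosed (↑(E ⊔ F) : Set H)) : E ⊔ F ∈ L := by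
  rw [← h.submodule_topologicalClosure_eq, ← sSup_pair]
  exact hL.join_mem _ (Set.pair_subset hE hF)

theorem minus_mem (hL : IsSubspaceLattice L) : minus L M ∈ L :=
  hL.join_mem _ fun _ hE ↦ hE.1

end IsSubspaceLattice

variable [CompleteSpace H]

theorem projOf_eq_starProjection [E.HasOrthogonalProjection] (hE : IsClosed (E : Set H)) :
    projOf E = E.starProjection :=
  dif_pos hE

theorem projOf_mem (hE : IsClosed (E : Set H)) (x : H) : projOf E x ∈ E := by
  have := hE.completeSpace_coe
  rw [projOf_eq_starProjection hE]
  exact E.starProjection_apply_mem x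

theorem projOf_eq_self (hE : IsClosed (E : Set H)) {x : H} (hx : x ∈ E) : projOf E x = x := by
  have := hE.completeSpace_coe
  rw [projOf_eq_starProjection hE, Submodule.starProjection_eq_self_iff.mpr hx]

theorem sub_projOf_mem_orthogonal (hE : IsClosed (E : Set H)) (x : H) : x - projOf E x ∈ Eᗮ := by
  have := hE.completeSpace_coe
  rw [projOf_eq_starProjection hE]
  exact Submodule.sub_starProjection_mem_orthogonal x

theorem eq_sum_projOf_mul_mul_projOf {ι : Type*} [Fintype ι] {V : ι → Submodule ℂ H}
    (hcl : ∀ i, IsClosed (V i : Set H)) (hV : Pairwise fun i j ↦ V i ⟂ V j) (htop : ⨆ i, V i = ⊤)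
    {A : H →L[ℂ] H} (hA : ∀ i, ∀ x ∈ V i, A x ∈ V i) :
    A = ∑ i, projOf (V i) * A * projOf (V i) := by
  have (i : ι) := (hcl i).completeSpace_coe
  simp only [projOf_eq_starProjection (hcl _)]
  exact eq_sum_starProjection_mul_mul_starProjection hV htop hA

theorem IsSubspaceLattice.eq_add_projOf_mul_mul_projOf (hL : IsSubspaceLattice L) (hE : E ∈ L)
    (hF : F ∈ L) (hK : K ∈ L) (hEF : E ⟂ F) (hEK : E ⟂ K) (hFK : F ⟂ K) (htop : E ⊔ F ⊔ K = ⊤)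
    {A : H →L[ℂ] H} (hA : A ∈ algL L) :
    A = projOf E * A * projOf E + projOf F * A * projOf F + projOf K * A * projOf K := by
  have hmem : ∀ i, ![E, F, K] i ∈ L := by simp [Fin.forall_fin_succ, hE, hF, hK]
  have hV : Pairwise fun i j ↦ ![E, F, K] i ⟂ ![E, F, K] j := by
    simp [Pairwise, Fin.forall_fin_succ, hEF, hEF.symm, hEK, hEK.symm, hFK, hFK.symm]
  have hiSup : ⨆ i, ![E, F, K] i = ⊤ := by
    rw [← htop, ← Finset.sup_univ_eq_iSup]
    simp [Fin.univ_succ, sup_assoc]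
  simpa [Fin.sum_univ_three] using eq_sum_projOf_mul_mul_projOf (fun i ↦ hL.isClosed _ (hmem i)) hV
    hiSup fun i ↦ hA _ (hmem i)

namespace IsCSL

theorem projOf_mem_of_mem (hL : IsCSL L) (hE : E ∈ L) (hF : F ∈ L) {x : H} (hx : x ∈ E) :
    projOf F x ∈ E := by
  rw [← projOf_eq_self (hL.isClosed E hE) hx, ← mul_apply_eq_comp, ← hL.commutes E hE F hF]
  exact projOf_mem (hL.isClosed E hE) _

theorem isOrtho_of_disjoint (hL : IsCSL L) (hE : E ∈ L) (hF : F ∈ L) (h : Disjoint E F) :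
    E ⟂ F := fun x hx ↦ by
  have hzero : projOf F x = 0 := (Submodule.disjoint_def.mp h) _ (hL.projOf_mem_of_mem hE hF hx)
    (projOf_mem (hL.isClosed F hF) x)
  simpa [hzero] using sub_projOf_mem_orthogonal (hL.isClosed F hF) x

theorem le_sup_inf_orthogonal (hL : IsCSL L) (hE : E ∈ L) (hF : F ∈ L) : E ≤ F ⊔ (E ⊓ Fᗮ) := by
  intro x hx
  rw [← add_sub_cancel (projOf F x) x]
  exact Submodule.add_mem_sup (projOf_mem (hL.isClosed F hF) x)
    ⟨E.sub_mem hx (hL.projOf_mem_of_mem hE hF hx), sub_projOf_mem_orthogonal (hL.isClosed F hF) x⟩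

theorem sup_mem_of_isOrtho (hL : IsCSL L) (hE : E ∈ L) (hF : F ∈ L) (h : E ⟂ F) : E ⊔ F ∈ L := by
  have := (hL.isClosed F hF).completeSpace_coe
  exact hL.sup_mem hE hF (isClosed_sup_of_isOrtho (hL.isClosed E hE) h)

theorem isolated_of_le_span_singleton (hL : IsCSL L) (hM : M ∈ L) {x₀ f₀ : H} (hx₀ : x₀ ∈ M)
    (hx₀0 : x₀ ≠ 0) (hMx₀ : M ≤ ℂ ∙ x₀) (hf₀ : (minus L M)ᗮ ≤ ℂ ∙ f₀) : Isolated L M := by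
  obtain rfl : M = ℂ ∙ x₀ := le_antisymm hMx₀ ((Submodule.span_singleton_le_iff_mem _ _).mpr hx₀)
  have hminus : minus L (ℂ ∙ x₀) ≤ (ℂ ∙ x₀)ᗮ :=
    closedJoin_le (Submodule.isClosed_orthogonal _) fun E ⟨hE, hx₀E⟩ ↦
      hL.isOrtho_of_disjoint hE hM <| (Submodule.disjoint_span_singleton' hx₀0).mpr fun h ↦
        hx₀E ((Submodule.span_singleton_le_iff_mem _ _).mpr h)
  have hx₀minus : x₀ ∈ (minus L (ℂ ∙ x₀))ᗮ := Submodule.orthogonal_le hminus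
    (Submodule.le_orthogonal_orthogonal _ hx₀)
  have heq : (minus L (ℂ ∙ x₀))ᗮ = ℂ ∙ x₀ := by
    refine le_antisymm (hf₀.trans ?_) ((Submodule.span_singleton_le_iff_mem _ _).mpr hx₀minus)
    exact (Submodule.span_singleton_le_iff_mem _ _).mpr
      (mem_span_singleton_symm (hf₀ hx₀minus) hx₀0)
  refine ⟨Module.rank_eq_one_iff_finrank_eq_one.mpr (finrank_span_singleton hx₀0), ?_⟩
  have : CompleteSpace (minus L (ℂ ∙ x₀)) := isClosed_closedJoin.completeSpace_coe
  rw [← heq, Submodule.orthogonal_orthogonal]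
  exact hL.minus_mem

end IsCSL

end SubspaceLattice

/-- `Φ` is linear on `Alg L` and preserves the rank of the operators of rank at most two in
`Alg L`; it need not map `Alg L` into itself. -/
structure IsLowRankPreserver {H : Type*} [NormedAddCommGroup H] [InnerProductSpace ℂ H]
    (L : Set (Submodule ℂ H)) (Φ : (H →L[ℂ] H) → (H →L[ℂ] H)) : Prop where
  map_add : ∀ A ∈ algL L, ∀ B ∈ algL L, Φ (A + B) = Φ A + Φ B
  map_smul : ∀ (c : ℂ), ∀ A ∈ algL L, Φ (c • A) = c • Φ A
  opRank_eq : ∀ A ∈ algL L, opRank A ≤ 2 → opRank (Φ A) = opRank A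

theorem opRank_add_le_two {H : Type*} [NormedAddCommGroup H] [InnerProductSpace ℂ H]
    [CompleteSpace H] {A B : H →L[ℂ] H} (hA : IsRankLEOne A) (hB : IsRankLEOne B) :
    opRank (A + B) ≤ 2 := by
  calc opRank (A + B) ≤ opRank A + opRank B := LinearMap.rank_add_le (A : H →ₗ[ℂ] H) B
    _ ≤ 1 + 1 := add_le_add (isRankLEOne_iff_opRank_le_one.mp hA)
        (isRankLEOne_iff_opRank_le_one.mp hB)
    _ = 2 := one_add_one_eq_two

theorem opRank_rankOne_le_two {H : Type*} [NormedAddCommGroup H] [InnerProductSpace ℂ H]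
    [CompleteSpace H] (x f : H) : opRank (rankOne x f) ≤ 2 :=
  (isRankLEOne_iff_opRank_le_one.mp ⟨x, f, rfl⟩).trans one_le_two

section RankPreserver

variable {H : Type*} [NormedAddCommGroup H] [InnerProductSpace ℂ H] {L : Set (Submodule ℂ H)}
  {Φ : (H →L[ℂ] H) → (H →L[ℂ] H)} {M N : Submodule ℂ H}

theorem RankPreserving.isLowRankPreserver (hΦ : RankPreserving L Φ) (hlin : IsLinearOnAlg L Φ) :
    IsLowRankPreserver L Φ where
  map_add := hlin.map_add
  map_smul := hlin.map_smul
  opRank_eq A hA h := hΦ A hA (h.trans_lt (Cardinal.natCast_lt_aleph0))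

theorem Consistent.hasCommonRange (hN : Consistent L Φ N) (x : N) :
    HasCommonRange fun f : (minus L N)ᗮ ↦ Φ (rankOne (x : H) f) :=
  let ⟨_, _, U, V, h⟩ := hN
  ⟨U x, fun f ↦ ⟨V f, h x f⟩⟩

theorem Consistent.hasCommonFunctional (hN : Consistent L Φ N) (f : (minus L N)ᗮ) :
    HasCommonFunctional fun x : N ↦ Φ (rankOne (x : H) f) :=
  let ⟨_, _, U, V, h⟩ := hN
  ⟨V f, fun x ↦ ⟨U x, h x f⟩⟩

theorem Twisted.hasCommonFunctional (hN : Twisted L Φ N) (x : N) :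
    HasCommonFunctional fun f : (minus L N)ᗮ ↦ Φ (rankOne (x : H) f) :=
  let ⟨_, _, U, V, h⟩ := hN
  ⟨V x, fun f ↦ ⟨U f, h x f⟩⟩

theorem Twisted.hasCommonRange (hN : Twisted L Φ N) (f : (minus L N)ᗮ) :
    HasCommonRange fun x : N ↦ Φ (rankOne (x : H) f) :=
  let ⟨_, _, U, V, h⟩ := hN
  ⟨U f, fun x ↦ ⟨V x, h x f⟩⟩

namespace IsLowRankPreserver

/-- The sesquilinear map `(x, f) ↦ Φ (x ⊗ f*)` on the vectors `x ∈ N` and `f ∈ N₋^⊥`, for which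
`x ⊗ f*` lies in `Alg L`. -/
noncomputable def pairing (hΦ : IsLowRankPreserver L Φ) (N : Submodule ℂ H) :
    N →ₗ[ℂ] ((minus L N)ᗮ : Submodule ℂ H) →ₗ⋆[ℂ] H →L[ℂ] H :=
  LinearMap.mk₂'ₛₗ (RingHom.id ℂ) (starRingEnd ℂ) (fun x f ↦ Φ (rankOne (x : H) f))
    (fun x x' f ↦ by
      rw [← hΦ.map_add _ (rankOne_mem_algL x.2 f.2) _ (rankOne_mem_algL x'.2 f.2)]
      simp [rankOne_eq])
    (fun c x f ↦ by
      rw [← hΦ.map_smul _ _ (rankOne_mem_algL x.2 f.2)]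
      simp [rankOne_eq])
    (fun x f f' ↦ by
      rw [← hΦ.map_add _ (rankOne_mem_algL x.2 f.2) _ (rankOne_mem_algL x.2 f'.2)]
      simp [rankOne_eq])
    fun c x f ↦ by
      rw [← hΦ.map_smul _ _ (rankOne_mem_algL x.2 f.2)]
      simp [rankOne_eq]

variable [CompleteSpace H]

theorem isRankLEOne_iff (hΦ : IsLowRankPreserver L Φ) {A : H →L[ℂ] H} (hA : A ∈ algL L)
    (hA2 : opRank A ≤ 2) : IsRankLEOne (Φ A) ↔ IsRankLEOne A := by
  rw [isRankLEOne_iff_opRank_le_one, isRankLEOne_iff_opRank_le_one, hΦ.opRank_eq A hA hA2]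

theorem isRankLEOne (hΦ : IsLowRankPreserver L Φ) {x f : H} (h : rankOne x f ∈ algL L) :
    IsRankLEOne (Φ (rankOne x f)) :=
  (hΦ.isRankLEOne_iff h (opRank_rankOne_le_two x f)).mpr ⟨x, f, rfl⟩

theorem mem_span_singleton_or (hΦ : IsLowRankPreserver L Φ) {x x' f f' : H}
    (hxf : rankOne x f ∈ algL L) (hxf' : rankOne x' f' ∈ algL L)
    (h : IsRankLEOne (Φ (rankOne x f) + Φ (rankOne x' f'))) (hx : x ≠ 0) (hf : f ≠ 0) :
    x' ∈ ℂ ∙ x ∨ f' ∈ ℂ ∙ f := by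
  rw [← hΦ.map_add _ hxf _ hxf', hΦ.isRankLEOne_iff (add_mem_algL hxf hxf')
    (opRank_add_le_two ⟨x, f, rfl⟩ ⟨x', f', rfl⟩)] at h
  exact h.mem_span_singleton_or hx hf

theorem isRankOnePairing_pairing (hΦ : IsLowRankPreserver L Φ) (N : Submodule ℂ H) :
    IsRankOnePairing (hΦ.pairing N) where
  isRankLEOne x f := hΦ.isRankLEOne (rankOne_mem_algL x.2 f.2)
  eq_zero_or_eq_zero {x f} h := by
    have hzero : rankOne (x : H) f = 0 := by
      rw [← opRank_eq_zero_iff, ← hΦ.opRank_eq _ (rankOne_mem_algL x.2 f.2)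
        (opRank_rankOne_le_two _ _), opRank_eq_zero_iff]
      exact h
    simpa [rankOne_eq] using hzero
  mem_span_or_mem_span {x x' f f'} h hx hf := by
    simpa [Submodule.mem_span_singleton, Subtype.ext_iff] using
      hΦ.mem_span_singleton_or (rankOne_mem_algL x.2 f.2) (rankOne_mem_algL x'.2 f'.2) h
        (by simpa using hx) (by simpa using hf)

theorem consistent_or_twisted (hΦ : IsLowRankPreserver L Φ) (hN : N ∈ famF L) :
    Consistent L Φ N ∨ Twisted L Φ N :=
  (hΦ.isRankOnePairing_pairing N).exists_eq_rankOne_or.imp (⟨hN.2.1, hN.2.2, ·⟩)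
    (⟨hN.2.1, hN.2.2, ·⟩)

theorem le_span_singleton_of_hasCommonRange_of_hasCommonFunctional
    (hΦ : IsLowRankPreserver L Φ) {x₀ f₀ : H} (hx₀ : x₀ ∈ N) (hx₀0 : x₀ ≠ 0)
    (hf₀ : f₀ ∈ (minus L N)ᗮ) (hf₀0 : f₀ ≠ 0)
    (hrange : HasCommonRange fun x : N ↦ Φ (rankOne (x : H) f₀))
    (hfunctional : HasCommonFunctional fun x : N ↦ Φ (rankOne (x : H) f₀)) : N ≤ ℂ ∙ x₀ := by
  intro x hx
  have h := (hΦ.isRankOnePairing_pairing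
    N).mem_span_singleton_of_hasCommonRange_of_hasCommonFunctional (x₀ := ⟨x₀, hx₀⟩)
    (y := ⟨f₀, hf₀⟩) (by simpa using hx₀0) (by simpa using hf₀0) hrange hfunctional ⟨x, hx⟩
  simpa [Submodule.mem_span_singleton, Subtype.ext_iff] using h

theorem orthogonal_minus_le_span_singleton (hΦ : IsLowRankPreserver L Φ) {x₀ f₀ : H} (hx₀ : x₀ ∈ N)
    (hx₀0 : x₀ ≠ 0) (hf₀ : f₀ ∈ (minus L N)ᗮ) (hf₀0 : f₀ ≠ 0)
    (hrange : HasCommonRange fun f : (minus L N)ᗮ ↦ Φ (rankOne x₀ (f : H)))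
    (hfunctional : HasCommonFunctional fun f : (minus L N)ᗮ ↦ Φ (rankOne x₀ (f : H))) :
    (minus L N)ᗮ ≤ ℂ ∙ f₀ := by
  intro f hf
  have h := (hΦ.isRankOnePairing_pairing
    N).flip.mem_span_singleton_of_hasCommonRange_of_hasCommonFunctional (x₀ := ⟨f₀, hf₀⟩)
    (y := ⟨x₀, hx₀⟩) (by simpa using hf₀0) (by simpa using hx₀0) hrange hfunctional ⟨f, hf⟩
  simpa [Submodule.mem_span_singleton, Subtype.ext_iff] using h

theorem isolated_of_isRankLEOne_add (hΦ : IsLowRankPreserver L Φ) (hL : IsCSL L) (hM : M ∈ L)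
    (hMN : M ≤ N) {x₀ f₀ : H} (hx₀ : x₀ ∈ M) (hx₀0 : x₀ ≠ 0) (hf₀ : f₀ ∈ (minus L N)ᗮ)
    (hf₀0 : f₀ ≠ 0)
    (hcol : HasCommonRange fun x : M ↦ Φ (rankOne (x : H) f₀))
    (hcol' : HasCommonFunctional fun x : M ↦ Φ (rankOne (x : H) f₀))
    (hrow : HasCommonRange fun f : (minus L N)ᗮ ↦ Φ (rankOne x₀ (f : H)))
    (hrow' : HasCommonFunctional fun f : (minus L N)ᗮ ↦ Φ (rankOne x₀ (f : H)))
    (hadd : ∀ x ∈ N, ∀ f ∈ (minus L M)ᗮ, IsRankLEOne (Φ (rankOne x f₀) + Φ (rankOne x₀ f))) :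
    Isolated L M := by
  have hMx₀ : M ≤ ℂ ∙ x₀ := hΦ.le_span_singleton_of_hasCommonRange_of_hasCommonFunctional hx₀ hx₀0
    (Submodule.orthogonal_le (minus_mono hMN) hf₀) hf₀0 hcol hcol'
  have hNf₀ : (minus L N)ᗮ ≤ ℂ ∙ f₀ :=
    hΦ.orthogonal_minus_le_span_singleton (hMN hx₀) hx₀0 hf₀ hf₀0 hrow hrow'
  refine hL.isolated_of_le_span_singleton (f₀ := f₀) hM hx₀ hx₀0 hMx₀ ?_
  by_cases hNM : N ≤ M
  · rwa [le_antisymm hMN hNM]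
  obtain ⟨x, hx, hxM⟩ := SetLike.not_le_iff_exists.mp hNM
  intro f hf
  have hx0 : x ≠ 0 := by rintro rfl; exact hxM M.zero_mem
  refine (hΦ.mem_span_singleton_or (rankOne_mem_algL hx hf₀) (rankOne_mem_algL hx₀ hf)
    (hadd x hx f hf) hx0 hf₀0).resolve_left fun hx₀x ↦ hxM ?_
  exact (Submodule.span_singleton_le_iff_mem _ _).mpr hx₀ (mem_span_singleton_symm hx₀x hx₀0)

end IsLowRankPreserver

theorem Consistent.isolated_of_twisted [CompleteSpace H] (hM : Consistent L Φ M)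
    (hN : Twisted L Φ N) (hΦ : IsLowRankPreserver L Φ) (hL : IsCSL L) (hML : M ∈ L)
    (hMN : M ≤ N) : Isolated L M := by
  obtain ⟨x₀, hx₀, hx₀0⟩ := M.exists_mem_ne_zero_of_ne_bot hM.1
  obtain ⟨f₀, hf₀, hf₀0⟩ := Submodule.exists_mem_ne_zero_of_ne_bot
    (orthogonal_minus_ne_bot hN.2.1)
  have hle : (minus L N)ᗮ ≤ (minus L M)ᗮ := Submodule.orthogonal_le (minus_mono hMN)
  have hrow := hM.hasCommonRange ⟨x₀, hx₀⟩
  have hcol := hN.hasCommonRange ⟨f₀, hf₀⟩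
  exact hΦ.isolated_of_isRankLEOne_add hL hML hMN hx₀ hx₀0 hf₀ hf₀0
    (hcol.comp (Submodule.inclusion hMN)) (hM.hasCommonFunctional ⟨f₀, hle hf₀⟩)
    (hrow.comp (Submodule.inclusion hle)) (hN.hasCommonFunctional ⟨x₀, hMN hx₀⟩)
    fun x hx f hf ↦ hcol.isRankLEOne_add hrow (i := ⟨x₀, hMN hx₀⟩) (j := ⟨f₀, hle hf₀⟩) rfl
      ((hΦ.isRankOnePairing_pairing M).ne_zero (x := ⟨x₀, hx₀⟩) (y := ⟨f₀, hle hf₀⟩)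
        (by simpa using hx₀0) (by simpa using hf₀0)) ⟨x, hx⟩ ⟨f, hf⟩

theorem Twisted.isolated_of_consistent [CompleteSpace H] (hM : Twisted L Φ M)
    (hN : Consistent L Φ N) (hΦ : IsLowRankPreserver L Φ) (hL : IsCSL L) (hML : M ∈ L)
    (hMN : M ≤ N) : Isolated L M := by
  obtain ⟨x₀, hx₀, hx₀0⟩ := M.exists_mem_ne_zero_of_ne_bot hM.1
  obtain ⟨f₀, hf₀, hf₀0⟩ := Submodule.exists_mem_ne_zero_of_ne_bot
    (orthogonal_minus_ne_bot hN.2.1)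
  have hle : (minus L N)ᗮ ≤ (minus L M)ᗮ := Submodule.orthogonal_le (minus_mono hMN)
  have hrow := hM.hasCommonFunctional ⟨x₀, hx₀⟩
  have hcol := hN.hasCommonFunctional ⟨f₀, hf₀⟩
  exact hΦ.isolated_of_isRankLEOne_add hL hML hMN hx₀ hx₀0 hf₀ hf₀0
    (hM.hasCommonRange ⟨f₀, hle hf₀⟩) (hcol.comp (Submodule.inclusion hMN))
    (hN.hasCommonRange ⟨x₀, hMN hx₀⟩) (hrow.comp (Submodule.inclusion hle))
    fun x hx f hf ↦ hcol.isRankLEOne_add hrow (i := ⟨x₀, hMN hx₀⟩) (j := ⟨f₀, hle hf₀⟩) rfl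
      ((hΦ.isRankOnePairing_pairing M).ne_zero (x := ⟨x₀, hx₀⟩) (y := ⟨f₀, hle hf₀⟩)
        (by simpa using hx₀0) (by simpa using hf₀0)) ⟨x, hx⟩ ⟨f, hf⟩

end RankPreserver

section CompletelyDistributive

theorem small_of_separableSpace {X : Type*} [MetricSpace X] [TopologicalSpace.SeparableSpace X] :
    Small.{0} X :=
  have ⟨_, he⟩ := KuratowskiEmbedding.exists_isometric_embedding X
  small_of_injective he.injective

variable {H : Type*} [NormedAddCommGroup H] [InnerProductSpace ℂ H] {L : Set (Submodule ℂ H)}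
  {E : Submodule ℂ H}

theorem small_set_submodule_of_separableSpace [TopologicalSpace.SeparableSpace H]
    (L : Set (Submodule ℂ H)) : Small.{0} L := by
  have : Small.{0} H := small_of_separableSpace
  have : Small.{0} (Submodule ℂ H) := small_of_injective SetLike.coe_injective
  infer_instance

namespace IsCompletelyDistributive

theorem iInf_closedJoin_eq (hcd : IsCompletelyDistributive L) {I : Type*} {J : I → Type*}
    [Small.{0} I] [∀ i, Small.{0} (J i)] (E : ∀ i, J i → Submodule ℂ H) (hE : ∀ i j, E i j ∈ L) :
    ⨅ i, closedJoin (Set.range (E i)) =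
      closedJoin (Set.range fun φ : ∀ i, J i ↦ ⨅ i, E i (φ i)) := by
  let e := (equivShrink.{0} I).symm
  let e' (i : Shrink.{0} I) := (equivShrink.{0} (J (e i))).symm
  have key := (hcd (Shrink.{0} I) (fun i ↦ Shrink.{0} (J (e i))) (fun i j ↦ E (e i) (e' i j))
    fun i j ↦ hE _ _).1
  have hjoins : ⨅ i, closedJoin (Set.range (E i)) =
      ⨅ i, closedJoin (Set.range fun j ↦ E (e i) (e' i j)) := by
    rw [← e.iInf_comp]
    exact iInf_congr fun i ↦ congrArg closedJoin ((e' i).surjective.range_comp _).symm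
  rw [hjoins, key, ← (e.piCongr e').surjective.range_comp]
  congr! 3 with φ
  simp only [Function.comp_apply]
  rw [← e.iInf_comp]
  simp only [Equiv.piCongr_apply_apply]

-- `IsCompletelyDistributive` only speaks about families indexed by types in `Type`.
variable [Small.{0} L]

-- A choice function picks one member of every family with join above `E`. The intersection `N` of
-- the picks cannot have `E ≤ N₋`: the members of `L` not containing `N` would be such a family.
theorem le_closedJoin_not_le_minus (hcd : IsCompletelyDistributive L) (hL : IsSubspaceLattice L)
    (hE : E ∈ L) : E ≤ closedJoin {N | N ∈ L ∧ N ≤ E ∧ ¬E ≤ minus L N} := by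
  let I := {S : Set L // E ≤ closedJoin (Subtype.val '' S)}
  have key := hcd.iInf_closedJoin_eq (I := I) (J := fun S ↦ S.1) (fun _ F ↦ F.1) fun _ F ↦ F.1.2
  have hEinf : E ≤ ⨅ S : I, closedJoin (Set.range fun F : S.1 ↦ (F.1 : Submodule ℂ H)) :=
    le_iInf fun S ↦ S.2.trans_eq (by rw [Set.image_eq_range])
  refine (hEinf.trans_eq key).trans (closedJoin_le isClosed_closedJoin ?_)
  rintro _ ⟨φ, rfl⟩
  let N : Submodule ℂ H := ⨅ S, (φ S).1
  have hN (S : I) : N ≤ (φ S).1 := iInf_le _ S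
  refine le_closedJoin (E := N) ⟨?_, ?_, fun hle ↦ ?_⟩
  · change ⨅ S, ((φ S).1 : Submodule ℂ H) ∈ L
    rw [← sInf_range]
    exact hL.sInf_mem _ (Set.range_subset_iff.mpr fun S ↦ (φ S).1.2)
  · let S : I := ⟨{⟨E, hE⟩}, le_closedJoin ⟨⟨E, hE⟩, rfl, rfl⟩⟩
    exact (hN S).trans_eq (congrArg Subtype.val (φ S).2)
  · have himage : Subtype.val '' {F : L | ¬N ≤ F} = {F | F ∈ L ∧ ¬N ≤ F} := by
      ext F
      simp [and_comm]
    let S : I := ⟨{F | ¬N ≤ F}, hle.trans_eq (congrArg closedJoin himage.symm)⟩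
    exact (φ S).2 (hN S)

theorem exists_not_le_minus (hcd : IsCompletelyDistributive L) (hL : IsSubspaceLattice L)
    (hE : E ∈ L) (hE0 : E ≠ ⊥) : ∃ N ∈ L, N ≠ ⊥ ∧ N ≤ E ∧ ¬E ≤ minus L N := by
  by_contra! h
  refine hE0 (eq_bot_iff.mpr ((hcd.le_closedJoin_not_le_minus hL hE).trans
    (closedJoin_le (hL.isClosed _ hL.bot_mem) fun N ⟨hN, hNE, hminus⟩ ↦ ?_)))
  by_contra hN0
  exact hminus (h N hN (mt (·.le) hN0) hNE)

theorem closedJoin_famF (hcd : IsCompletelyDistributive L) (hL : IsSubspaceLattice L) :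
    closedJoin (famF L) = ⊤ := by
  refine top_unique ((hcd.le_closedJoin_not_le_minus hL hL.top_mem).trans
    (closedJoin_le isClosed_closedJoin fun N ⟨hN, _, hminus⟩ ↦ ?_))
  rcases eq_or_ne N ⊥ with rfl | hN0
  · exact bot_le
  · exact le_closedJoin ⟨hN, hN0, mt (·.ge) hminus⟩

end IsCompletelyDistributive

end CompletelyDistributive

section Parts

variable {H : Type*} [NormedAddCommGroup H] [InnerProductSpace ℂ H] {L S : Set (Submodule ℂ H)}
  {Φ : (H →L[ℂ] H) → (H →L[ℂ] H)} {K : Submodule ℂ H}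

/-- `M_i`: the join of the isolated members of `L`. -/
noncomputable def isolatedPart (L : Set (Submodule ℂ H)) : Submodule ℂ H :=
  closedJoin {E | E ∈ L ∧ Isolated L E}

/-- `M_c`: the part of the join of the consistent members of `L` orthogonal to the isolated part. -/
noncomputable def consistentPart (L : Set (Submodule ℂ H)) (Φ : (H →L[ℂ] H) → (H →L[ℂ] H)) :
    Submodule ℂ H :=
  closedJoin {E | E ∈ L ∧ Consistent L Φ E} ⊓ (isolatedPart L)ᗮ

/-- `M_t`: the part of the join of the twisted members of `L` orthogonal to the isolated part. -/
noncomputable def twistedPart (L : Set (Submodule ℂ H)) (Φ : (H →L[ℂ] H) → (H →L[ℂ] H)) :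
    Submodule ℂ H :=
  closedJoin {E | E ∈ L ∧ Twisted L Φ E} ⊓ (isolatedPart L)ᗮ

theorem isOrtho_isolatedPart_consistentPart : isolatedPart L ⟂ consistentPart L Φ :=
  Submodule.IsOrtho.symm inf_le_right

theorem isOrtho_isolatedPart_twistedPart : isolatedPart L ⟂ twistedPart L Φ :=
  Submodule.IsOrtho.symm inf_le_right

theorem exists_le_of_not_closedJoin_le_minus (hS : S ⊆ L) (h : ¬closedJoin S ≤ minus L K) :
    ∃ N ∈ S, K ≤ N := by
  contrapose! h
  exact closedJoin_le isClosed_closedJoin fun N hN ↦ le_minus (hS hN) (h N hN)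

namespace IsSubspaceLattice

theorem isolatedPart_mem (hL : IsSubspaceLattice L) : isolatedPart L ∈ L :=
  hL.join_mem _ fun _ hE ↦ hE.1

theorem orthogonal_isolatedPart_mem (hL : IsSubspaceLattice L) : (isolatedPart L)ᗮ ∈ L := by
  rw [isolatedPart, orthogonal_closedJoin, ← sInf_image]
  exact hL.sInf_mem _ (Set.image_subset_iff.mpr fun E hE ↦ hE.2.2)

theorem consistentPart_mem (hL : IsSubspaceLattice L) : consistentPart L Φ ∈ L :=
  hL.inf_mem (hL.join_mem _ fun _ hE ↦ hE.1) hL.orthogonal_isolatedPart_mem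

theorem twistedPart_mem (hL : IsSubspaceLattice L) : twistedPart L Φ ∈ L :=
  hL.inf_mem (hL.join_mem _ fun _ hE ↦ hE.1) hL.orthogonal_isolatedPart_mem

end IsSubspaceLattice

namespace IsLowRankPreserver

variable [CompleteSpace H] [Small.{0} L]

theorem isOrtho_consistentPart_twistedPart (hΦ : IsLowRankPreserver L Φ) (hL : IsCSL L)
    (hcd : IsCompletelyDistributive L) : consistentPart L Φ ⟂ twistedPart L Φ := by
  refine hL.isOrtho_of_disjoint hL.consistentPart_mem hL.twistedPart_mem (disjoint_iff.mpr ?_)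
  by_contra hne
  obtain ⟨K, hK, hK0, hKle, hminus⟩ := hcd.exists_not_le_minus hL.toIsSubspaceLattice
    (hL.inf_mem hL.consistentPart_mem hL.twistedPart_mem) hne
  obtain ⟨N, ⟨-, hN⟩, hKN⟩ := exists_le_of_not_closedJoin_le_minus (fun _ hE ↦ hE.1) fun h ↦
    hminus (inf_le_left.trans (inf_le_left.trans h))
  obtain ⟨N', ⟨-, hN'⟩, hKN'⟩ := exists_le_of_not_closedJoin_le_minus (fun _ hE ↦ hE.1) fun h ↦
    hminus (inf_le_right.trans (inf_le_left.trans h))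
  have hisolated : Isolated L K :=
    (hΦ.consistent_or_twisted ⟨hK, hK0, fun htop ↦ hminus (htop ▸ le_top)⟩).elim
      (·.isolated_of_twisted hN' hΦ hL hK hKN') (·.isolated_of_consistent hN hΦ hL hK hKN)
  have hKi : K ≤ isolatedPart L := le_closedJoin ⟨hK, hisolated⟩
  have hKi' : K ≤ (isolatedPart L)ᗮ := hKle.trans (inf_le_left.trans inf_le_right)
  exact hK0 (le_bot_iff.mp (Submodule.orthogonal_disjoint _ hKi hKi'))

theorem sup_consistentPart_sup_twistedPart (hΦ : IsLowRankPreserver L Φ) (hL : IsCSL L)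
    (hcd : IsCompletelyDistributive L) :
    isolatedPart L ⊔ consistentPart L Φ ⊔ twistedPart L Φ = ⊤ := by
  have hmem : isolatedPart L ⊔ consistentPart L Φ ⊔ twistedPart L Φ ∈ L :=
    hL.sup_mem_of_isOrtho (hL.sup_mem_of_isOrtho hL.isolatedPart_mem hL.consistentPart_mem
      isOrtho_isolatedPart_consistentPart) hL.twistedPart_mem (Submodule.isOrtho_sup_left.mpr
      ⟨isOrtho_isolatedPart_twistedPart, hΦ.isOrtho_consistentPart_twistedPart hL hcd⟩)
  have hsplit {K : Submodule ℂ H} (hK : K ∈ L) : K ≤ isolatedPart L ⊔ (K ⊓ (isolatedPart L)ᗮ) :=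
    hL.le_sup_inf_orthogonal hK hL.isolatedPart_mem
  rw [← top_le_iff, ← hcd.closedJoin_famF hL.toIsSubspaceLattice]
  refine closedJoin_le (hL.isClosed _ hmem) fun N hN ↦ ?_
  rcases hΦ.consistent_or_twisted hN with h | h
  · have hNc : N ≤ closedJoin {E | E ∈ L ∧ Consistent L Φ E} := le_closedJoin ⟨hN.1, h⟩
    exact hNc.trans ((hsplit (hL.join_mem _ fun _ hE ↦ hE.1)).trans le_sup_left)
  · have hNt : N ≤ closedJoin {E | E ∈ L ∧ Twisted L Φ E} := le_closedJoin ⟨hN.1, h⟩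
    exact hNt.trans ((hsplit (hL.join_mem _ fun _ hE ↦ hE.1)).trans
      (sup_le_sup_right le_sup_left _))

end IsLowRankPreserver

end Parts

theorem stmt_9_general {H : Type*} [NormedAddCommGroup H] [InnerProductSpace ℂ H] [CompleteSpace H]
    (L : Set (Submodule ℂ H)) [Small.{0} L] (hL : IsCSL L) (hcd : IsCompletelyDistributive L)
    (Φ : (H →L[ℂ] H) → (H →L[ℂ] H)) (hΦ : IsLowRankPreserver L Φ)
    (Mi Mc Mt : Submodule ℂ H)
    (hMi : Mi = closedJoin {E | E ∈ L ∧ Isolated L E})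
    (hMc : Mc = closedJoin {E | E ∈ L ∧ Consistent L Φ E} ⊓ Miᗮ)
    (hMt : Mt = closedJoin {E | E ∈ L ∧ Twisted L Φ E} ⊓ Miᗮ) :
    (IsClosed (Mi : Set H) ∧ IsClosed (Mc : Set H) ∧ IsClosed (Mt : Set H)) ∧
    (Mc ≤ Miᗮ ∧ Mt ≤ Miᗮ ∧ Mt ≤ Mcᗮ) ∧
    (Mi ⊔ Mc ⊔ Mt = ⊤) ∧
    (Mi ∈ L ∧ Mc ∈ L ∧ Mt ∈ L ∧ Miᗮ ∈ L ∧ Mcᗮ ∈ L ∧ Mtᗮ ∈ L) ∧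
    (∀ A ∈ algL L,
      A = projOf Mi * A * projOf Mi + projOf Mc * A * projOf Mc
            + projOf Mt * A * projOf Mt) := by
  obtain rfl : Mi = isolatedPart L := hMi
  obtain rfl : Mc = consistentPart L Φ := hMc
  obtain rfl : Mt = twistedPart L Φ := hMt
  have hi := hL.isolatedPart_mem
  have hc := hL.consistentPart_mem (Φ := Φ)
  have ht := hL.twistedPart_mem (Φ := Φ)
  have hic : isolatedPart L ⟂ consistentPart L Φ := isOrtho_isolatedPart_consistentPart
  have hit : isolatedPart L ⟂ twistedPart L Φ := isOrtho_isolatedPart_twistedPart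
  have hct := hΦ.isOrtho_consistentPart_twistedPart hL hcd
  have htop := hΦ.sup_consistentPart_sup_twistedPart hL hcd
  have hc' : (consistentPart L Φ)ᗮ = isolatedPart L ⊔ twistedPart L Φ :=
    orthogonal_eq_of_isOrtho_of_sup_eq_top (Submodule.isOrtho_sup_right.mpr ⟨hic.symm, hct⟩)
      (by rw [← htop, ← sup_assoc, sup_comm (consistentPart L Φ)])
  have ht' : (twistedPart L Φ)ᗮ = isolatedPart L ⊔ consistentPart L Φ :=
    orthogonal_eq_of_isOrtho_of_sup_eq_top (Submodule.isOrtho_sup_right.mpr ⟨hit.symm, hct.symm⟩)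
      (by rw [← htop, sup_comm])
  exact ⟨⟨hL.isClosed _ hi, hL.isClosed _ hc, hL.isClosed _ ht⟩, ⟨hic.symm, hit.symm, hct.symm⟩,
    htop, ⟨hi, hc, ht, hL.orthogonal_isolatedPart_mem, hc' ▸ hL.sup_mem_of_isOrtho hi ht hit,
    ht' ▸ hL.sup_mem_of_isOrtho hi hc hic⟩,
    fun _ ↦ hL.eq_add_projOf_mul_mul_projOf hi hc ht hic hit hct htop⟩

theorem stmt_9 {H : Type*} [NormedAddCommGroup H] [InnerProductSpace ℂ H]
    [CompleteSpace H] [TopologicalSpace.SeparableSpace H]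
    (L : Set (Submodule ℂ H)) (hL : IsCSL L) (hcd : IsCompletelyDistributive L)
    (Φ : (H →L[ℂ] H) → (H →L[ℂ] H)) (hlin : IsLinearOnAlg L Φ)
    (hrank : RankPreserving L Φ)
    (Mi Mc Mt : Submodule ℂ H)
    (hMi : Mi = closedJoin {E | E ∈ L ∧ Isolated L E})
    (hMc : Mc = closedJoin {E | E ∈ L ∧ Consistent L Φ E} ⊓ Miᗮ)
    (hMt : Mt = closedJoin {E | E ∈ L ∧ Twisted L Φ E} ⊓ Miᗮ) :
    (IsClosed (Mi : Set H) ∧ IsClosed (Mc : Set H) ∧ IsClosed (Mt : Set H)) ∧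
    (Mc ≤ Miᗮ ∧ Mt ≤ Miᗮ ∧ Mt ≤ Mcᗮ) ∧
    (Mi ⊔ Mc ⊔ Mt = ⊤) ∧
    (Mi ∈ L ∧ Mc ∈ L ∧ Mt ∈ L ∧ Miᗮ ∈ L ∧ Mcᗮ ∈ L ∧ Mtᗮ ∈ L) ∧
    (∀ A ∈ algL L,
      A = projOf Mi * A * projOf Mi + projOf Mc * A * projOf Mc
            + projOf Mt * A * projOf Mt) := by
  have := small_set_submodule_of_separableSpace L
  exact stmt_9_general L hL hcd Φ (hrank.isLowRankPreserver hlin) Mi Mc Mt hMi hMc hMt
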